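/- The connected components of the graph G defined by |S_{ij}| > λα (i ≠ j) coincide exactly, up to relabeling, with the connected components of the graph 𝒢 defined by Θ*_{ij} ≠ 0 (i ≠ j), where Θ* is the unique graphical elastic net minimizer: the two graphs have the same number of connected components and the same vertex partitions. -/

import Mathlib

open Matrix BigOperators

/-- The graphical elastic net objective (zero target). -/
noncomputable def gelnetObj {p : ℕ} (S : Matrix (Fin p) (Fin p) ℝ) (l a : ℝ)
    (Θ : Matrix (Fin p) (Fin p) ℝ) : ℝ :=
  -Real.log Θ.det + (S * Θ).trace +
    l * (a * ∑ i, ∑ j, |Θ i j| + (1 - a) / 2 * ∑ i, ∑ j, (Θ i j) ^ 2)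

/-!
Whether a relation connects two vertices is decided by the labellings of the vertices that it
preserves, so it suffices to show that the minimizer `Θ` is block-diagonal with respect to a
labelling exactly when no thresholded entry of `S` joins two blocks.

* If the off-block entries of `S` are below the threshold, zeroing the off-block entries of `Θ`
  does not increase the trace and penalty terms, while it strictly increases `log det` unless it
  leaves `Θ` unchanged: `Θ⁻¹` may be replaced by the inverse of the pinched matrix in the tangent
  inequality for the concave function `log det`, and then the linear term vanishes.
* If `Θ` is block-diagonal, so is `Θ⁻¹`. Perturbing `Θ` at a vanishing entry `(i, j)` gives the
  stationarity condition `|S i j - Θ⁻¹ i j| ≤ λα`, which off the blocks reads `|S i j| ≤ λα`.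
-/

section Reachability

universe u

lemma reachable_fromRel_iff_forall_eq {V : Type u} {r : V → V → Prop} {i j : V} :
    (SimpleGraph.fromRel r).Reachable i j ↔
      ∀ (ι : Type u) (b : V → ι), (∀ k m, r k m → b k = b m) → b i = b j := by
  refine ⟨fun hij ι b hb ↦ ?_, fun h ↦ SimpleGraph.ConnectedComponent.exact
    (h _ (SimpleGraph.fromRel r).connectedComponentMk fun k m hkm ↦ ?_)⟩
  · rw [SimpleGraph.reachable_iff_reflTransGen] at hij
    induction hij with
    | refl => rfl
    | tail _ hadj ih => exact ih.trans (hadj.2.elim (hb _ _) fun h ↦ (hb _ _ h).symm)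
  · by_cases hne : k = m
    · rw [hne]
    · exact SimpleGraph.ConnectedComponent.sound (SimpleGraph.Adj.reachable ⟨hne, Or.inl hkm⟩)

end Reachability

section Continuity

open Filter Topology
open scoped ComplexOrder

variable {n 𝕜 : Type*}

lemma eventually_posDef_of_isHermitian [Finite n] [RCLike 𝕜] {A : Matrix n n 𝕜} (hA : A.PosDef) :
    ∀ᶠ B in 𝓝 A, B.IsHermitian → B.PosDef := by
  have := Fintype.ofFinite n
  have hform : Continuous fun q : Matrix n n 𝕜 × (n → 𝕜) ↦
      RCLike.re (star q.2 ⬝ᵥ (q.1 *ᵥ q.2)) := by fun_prop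
  have hsphere : ∀ᶠ B in 𝓝 A, ∀ x ∈ Metric.sphere (0 : n → 𝕜) 1,
      0 < RCLike.re (star x ⬝ᵥ (B *ᵥ x)) := by
    refine (isCompact_sphere 0 1).eventually_forall_of_forall_eventually fun x hx ↦ ?_
    exact hform.continuousAt.eventually_const_lt
      (hA.re_dotProduct_pos (ne_zero_of_mem_unit_sphere ⟨x, hx⟩))
  filter_upwards [hsphere] with B hB hBherm
  refine .of_dotProduct_mulVec_pos hBherm fun x hx ↦ ?_
  have hnorm : 0 < ‖x‖ := norm_pos_iff.mpr hx
  have hunit := hB ((‖x‖⁻¹ : 𝕜) • x) (by simp [norm_smul, hnorm.ne'])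
  have hscale : RCLike.re (star ((‖x‖⁻¹ : 𝕜) • x) ⬝ᵥ (B *ᵥ ((‖x‖⁻¹ : 𝕜) • x)))
      = ‖x‖⁻¹ ^ 2 * RCLike.re (star x ⬝ᵥ (B *ᵥ x)) := by
    simp only [star_smul, mulVec_smul, smul_dotProduct, dotProduct_smul, smul_eq_mul]
    rw [← RCLike.ofReal_inv, RCLike.star_def, RCLike.conj_ofReal, RCLike.re_ofReal_mul,
      RCLike.re_ofReal_mul, sq, mul_assoc]
  rw [RCLike.pos_iff, hBherm.im_star_dotProduct_mulVec_self]
  exact ⟨pos_of_mul_pos_right (hscale ▸ hunit) (by positivity), rfl⟩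

lemma continuousAt_inv_apply [Fintype n] [DecidableEq n] [Field 𝕜] [TopologicalSpace 𝕜]
    [IsTopologicalDivisionRing 𝕜] {A : Matrix n n 𝕜} (hA : IsUnit A) (i j : n) :
    ContinuousAt (fun B : Matrix n n 𝕜 ↦ B⁻¹ i j) A := by
  have hdet : A.det ≠ 0 := ((isUnit_iff_isUnit_det A).mp hA).ne_zero
  have hinv : ContinuousAt Inv.inv A :=
    continuousAt_matrix_inv A (by simpa using continuousAt_inv₀ hdet)
  exact (hinv.tendsto.apply_nhds i).apply_nhds j

lemma abs_sub_le_of_eventually_mul_le {g : ℝ → ℝ} {x s κ c : ℝ} (hg : Tendsto g (𝓝 0) (𝓝 x))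
    (hle : ∀ᶠ t in 𝓝 0, t * g t ≤ s * t + κ * |t| + c * t ^ 2) : |s - x| ≤ κ := by
  have hside (σ : ℝ) (hσ : |σ| = 1) : σ * (x - s) ≤ κ := by
    have hscale : Tendsto (fun u : ℝ ↦ σ * u) (𝓝[>] 0) (𝓝 0) :=
      (Continuous.tendsto' (by fun_prop) _ _ (by simp)).mono_left nhdsWithin_le_nhds
    have hbound : Tendsto (fun u : ℝ ↦ κ + c * u) (𝓝[>] 0) (𝓝 κ) :=
      (Continuous.tendsto' (by fun_prop) _ _ (by simp)).mono_left nhdsWithin_le_nhds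
    refine le_of_tendsto_of_tendsto (((hg.comp hscale).sub_const s).const_mul σ) hbound ?_
    filter_upwards [hscale.eventually hle, self_mem_nhdsWithin] with u hu hupos
    rw [abs_mul, hσ, abs_of_pos hupos, mul_pow, ← sq_abs σ, hσ] at hu
    refine le_of_mul_le_mul_left ?_ hupos
    simp only [Function.comp_apply]
    linarith
  have hplus := hside 1 abs_one
  have hminus := hside (-1) (by simp)
  exact abs_le.mpr ⟨by linarith, by linarith⟩

end Continuity

section LogDet

variable {n : Type*} [Fintype n] [DecidableEq n]

lemma log_det_lt_trace_sub_card {M : Matrix n n ℝ} (hM : M.PosDef) (hne : M ≠ 1) :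
    Real.log M.det < M.trace - Fintype.card n := by
  have hpos := hM.eigenvalues_pos
  obtain ⟨i, hi⟩ : ∃ i, hM.1.eigenvalues i ≠ 1 := by
    by_contra! hone
    have hdiag : (RCLike.ofReal ∘ hM.1.eigenvalues : n → ℝ) = 1 := funext hone
    refine hne (hM.1.spectral_theorem.trans ?_)
    rw [hdiag, diagonal_one', map_one]
  calc Real.log M.det = ∑ k, Real.log (hM.1.eigenvalues k) := by
        rw [hM.1.det_eq_prod_eigenvalues]
        exact Real.log_prod fun k _ ↦ (hpos k).ne'
    _ < ∑ k, (hM.1.eigenvalues k - 1) :=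
        Finset.sum_lt_sum (fun k _ ↦ Real.log_le_sub_one_of_pos (hpos k))
          ⟨i, Finset.mem_univ i, Real.log_lt_sub_one_of_pos (hpos i) hi⟩
    _ = M.trace - Fintype.card n := by simp [hM.1.trace_eq_sum_eigenvalues]

open scoped MatrixOrder in
lemma log_det_lt_log_det_add_trace {A B : Matrix n n ℝ} (hA : A.PosDef) (hB : B.PosDef)
    (hne : B ≠ A) : Real.log B.det < Real.log A.det + (A⁻¹ * (B - A)).trace := by
  obtain ⟨C, hC, rfl⟩ :=
    CStarAlgebra.isStrictlyPositive_iff_eq_star_mul_self.mp hA.isStrictlyPositive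
  have hCdet : IsUnit C.det := (isUnit_iff_isUnit_det C).mp hC
  have hCsdet : IsUnit (star C).det := (isUnit_iff_isUnit_det _).mp hC.star
  obtain ⟨M, rfl⟩ : ∃ M, B = star C * M * C :=
    ⟨(star C)⁻¹ * B * C⁻¹, by rw [mul_assoc, nonsing_inv_mul_cancel_right _ _ hCdet,
      mul_nonsing_inv_cancel_left _ _ hCsdet]⟩
  have hM : M.PosDef := (IsUnit.posDef_star_left_conjugate_iff hC).mp hB
  have hdet : Real.log (star C * M * C).det = Real.log (star C * C).det + Real.log M.det := by
    rw [← Real.log_mul hA.det_pos.ne' hM.det_pos.ne']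
    congr 1
    simp only [det_mul]
    ring
  have htrace : ((star C * C)⁻¹ * (star C * M * C - star C * C)).trace
      = M.trace - Fintype.card n := by
    have hfactor : (star C * C)⁻¹ * (star C * M * C - star C * C) = C⁻¹ * ((M - 1) * C) := by
      rw [Matrix.mul_inv_rev, mul_assoc (star C), ← mul_sub, mul_assoc,
        nonsing_inv_mul_cancel_left _ _ hCsdet, sub_mul, one_mul]
    rw [hfactor, trace_mul_comm, mul_nonsing_inv_cancel_right _ _ hCdet, trace_sub, trace_one]
  have hMne : M ≠ 1 := by
    rintro rfl
    exact hne (by rw [mul_one])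
  rw [hdet, htrace]
  gcongr
  exact log_det_lt_trace_sub_card hM hMne

lemma log_det_le_log_det_add_trace {A B : Matrix n n ℝ} (hA : A.PosDef) (hB : B.PosDef) :
    Real.log B.det ≤ Real.log A.det + (A⁻¹ * (B - A)).trace := by
  rcases eq_or_ne B A with rfl | hne
  · simp
  · exact (log_det_lt_log_det_add_trace hA hB hne).le

end LogDet

section Blocks

variable {n ι R : Type*}

/-- Block-diagonality up to a permutation of the indices: the blocks are the fibres of the
labelling `b`, and `A` vanishes off them. -/
def IsBlockDiagonal [Zero R] (A : Matrix n n R) (b : n → ι) : Prop :=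
  ∀ i j, A i j ≠ 0 → b i = b j

lemma IsBlockDiagonal.apply_eq_zero [Zero R] {A : Matrix n n R} {b : n → ι}
    (hA : IsBlockDiagonal A b) {i j : n} (hij : b i ≠ b j) : A i j = 0 :=
  not_imp_comm.mp (hA i j) hij

lemma IsBlockDiagonal.inv [Fintype n] [DecidableEq n] [CommRing R] {A : Matrix n n R} {b : n → ι}
    (hA : IsBlockDiagonal A b) (hunit : IsUnit A) : IsBlockDiagonal A⁻¹ b := by
  let := hunit.invertible
  intro i j
  -- Block-triangularity for the single block of `i` against all the others already suffices.
  have htri : A.BlockTriangular fun k ↦ b k = b i := fun k m hkm ↦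
    hA.apply_eq_zero fun heq ↦ by simp [heq] at hkm
  refine not_imp_comm.mp fun hij ↦ blockTriangular_inv_of_blockTriangular htri ?_
  simp [lt_iff_le_not_ge, Ne.symm hij]

/-- The pinching of `A` by the labelling `b`: the entries off the blocks (the fibres of `b`) are
replaced by zero. It is the block-diagonal competitor of the minimizer. -/
def pinching [DecidableEq ι] [Zero R] (b : n → ι) (A : Matrix n n R) : Matrix n n R :=
  of fun i j ↦ if b i = b j then A i j else 0

variable [DecidableEq ι]

lemma pinching_apply [Zero R] (b : n → ι) (A : Matrix n n R) (i j : n) :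
    pinching b A i j = if b i = b j then A i j else 0 := rfl

lemma isBlockDiagonal_pinching [Zero R] (b : n → ι) (A : Matrix n n R) :
    IsBlockDiagonal (pinching b A) b := by
  intro i j hij
  by_contra hne
  exact hij (if_neg hne)

lemma pinching_eq_self_iff [Zero R] {b : n → ι} {A : Matrix n n R} :
    pinching b A = A ↔ IsBlockDiagonal A b := by
  refine ⟨fun h ↦ h ▸ isBlockDiagonal_pinching b A, fun h ↦ ?_⟩
  ext i j
  exact ite_eq_left_iff.mpr fun hij ↦ (h.apply_eq_zero hij).symm

lemma IsBlockDiagonal.trace_mul_sub_pinching [Fintype n] [NonUnitalNonAssocRing R] {b : n → ι}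
    {M : Matrix n n R} (hM : IsBlockDiagonal M b) (A : Matrix n n R) :
    (M * (A - pinching b A)).trace = 0 := by
  refine Finset.sum_eq_zero fun i _ ↦ Finset.sum_eq_zero fun j _ ↦ ?_
  by_cases hij : b i = b j
  · simp [pinching_apply, hij]
  · simp [hM.apply_eq_zero hij]

lemma star_dotProduct_pinching_mulVec [Fintype n] [Semiring R] [StarRing R] (b : n → ι)
    (A : Matrix n n R) (x : n → R) :
    star x ⬝ᵥ (pinching b A *ᵥ x) = ∑ c ∈ Finset.univ.image b,
      star (fun k ↦ if b k = c then x k else 0) ⬝ᵥ (A *ᵥ fun k ↦ if b k = c then x k else 0) := by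
  simp only [dotProduct, mulVec, pinching_apply, Pi.star_apply, apply_ite star, star_zero]
  rw [Finset.sum_comm]
  refine Finset.sum_congr rfl fun i _ ↦ ?_
  simp [eq_comm]

lemma posDef_pinching [Finite n] [Ring R] [PartialOrder R] [IsOrderedCancelAddMonoid R]
    [StarRing R] {A : Matrix n n R} (hA : A.PosDef) (b : n → ι) : (pinching b A).PosDef := by
  have := Fintype.ofFinite n
  refine .of_dotProduct_mulVec_pos ?_ fun x hx ↦ ?_
  · ext i j
    simp [pinching_apply, eq_comm (a := b j), apply_ite star, hA.1.apply]
  · obtain ⟨k, hk⟩ := Function.ne_iff.mp hx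
    rw [star_dotProduct_pinching_mulVec]
    refine Finset.sum_pos' (fun c _ ↦ hA.posSemidef.dotProduct_mulVec_nonneg _)
      ⟨b k, Finset.mem_image_of_mem b (Finset.mem_univ k), hA.dotProduct_mulVec_pos ?_⟩
    exact Function.ne_iff.mpr ⟨k, by simpa using hk⟩

lemma log_det_lt_log_det_pinching [Fintype n] [DecidableEq n] {A : Matrix n n ℝ} (hA : A.PosDef)
    {b : n → ι} (hne : pinching b A ≠ A) : Real.log A.det < Real.log (pinching b A).det := by
  have hB : (pinching b A).PosDef := posDef_pinching hA b
  have hinv : IsBlockDiagonal (pinching b A)⁻¹ b := (isBlockDiagonal_pinching b A).inv hB.isUnit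
  have htangent := log_det_lt_log_det_add_trace hB hA hne.symm
  rwa [hinv.trace_mul_sub_pinching, add_zero] at htangent

end Blocks

section SymmSingle

variable {n : Type*} [DecidableEq n]

/-- The symmetric direction `eᵢeⱼᵀ + eⱼeᵢᵀ` in which a symmetric matrix is perturbed at its
off-diagonal entry `(i, j)`; for `i = j` its only nonzero entry is `2`. -/
def symmSingle (R : Type*) [Semiring R] (i j : n) : Matrix n n R :=
  single i j 1 + single j i 1

variable {R : Type*} [Semiring R]

lemma isHermitian_symmSingle [StarRing R] (i j : n) : (symmSingle R i j).IsHermitian := by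
  simp [symmSingle, IsHermitian, add_comm]

variable [Fintype n]

lemma trace_mul_symmSingle (M : Matrix n n R) (i j : n) :
    (M * symmSingle R i j).trace = M i j + M j i := by
  simp [symmSingle, mul_add, trace_mul_single, add_comm]

lemma sum_apply_add_smul_symmSingle {N : Type*} [AddCommMonoid N] {A : Matrix n n R} {i j : n}
    (hne : i ≠ j) (hij : A i j = 0) (hji : A j i = 0) (F : n → n → R → N)
    (hF : ∀ k m, F k m 0 = 0) (t : R) :
    ∑ k, ∑ m, F k m ((A + t • symmSingle R i j) k m)
      = ∑ k, ∑ m, F k m (A k m) + (F i j t + F j i t) := by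
  have hentry (k m : n) : F k m ((A + t • symmSingle R i j) k m)
      = F k m (A k m) + (single i j (F i j t) k m + single j i (F j i t) k m) := by
    by_cases h₁ : i = k ∧ j = m
    · obtain ⟨rfl, rfl⟩ := h₁
      simp [symmSingle, hne, hij, hF]
    by_cases h₂ : j = k ∧ i = m
    · obtain ⟨rfl, rfl⟩ := h₂
      simp [symmSingle, hne, hji, hF]
    · simp [symmSingle, h₁, h₂]
  simp only [hentry, Finset.sum_add_distrib, single_apply]
  simp [ite_and]

end SymmSingle

section GraphicalElasticNet

open Filter Topology

variable {p : ℕ} {S A : Matrix (Fin p) (Fin p) ℝ} {l a : ℝ}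

/-- The contribution of one entry `θ` of `Θ`, paired with the entry `s` of `S`, to the trace and
penalty terms of the graphical elastic net objective. -/
noncomputable def gelnetEntryCost (l a s θ : ℝ) : ℝ :=
  s * θ + l * a * |θ| + l * (1 - a) / 2 * θ ^ 2

lemma gelnetEntryCost_zero (l a s : ℝ) : gelnetEntryCost l a s 0 = 0 := by
  simp [gelnetEntryCost]

lemma gelnetEntryCost_nonneg {s : ℝ} (hla : 0 ≤ l * (1 - a)) (hs : |s| ≤ l * a) (θ : ℝ) :
    0 ≤ gelnetEntryCost l a s θ := by
  have hlinear : -(s * θ) ≤ l * a * |θ| := calc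
    -(s * θ) ≤ |s * θ| := neg_le_abs _
    _ = |s| * |θ| := abs_mul s θ
    _ ≤ l * a * |θ| := by gcongr
  have hridge : 0 ≤ l * (1 - a) / 2 * θ ^ 2 := by positivity
  unfold gelnetEntryCost
  linarith

lemma gelnetObj_eq_sum (S : Matrix (Fin p) (Fin p) ℝ) (l a : ℝ) (Θ : Matrix (Fin p) (Fin p) ℝ) :
    gelnetObj S l a Θ = -Real.log Θ.det + ∑ i, ∑ j, gelnetEntryCost l a (S j i) (Θ i j) := by
  have htrace : (S * Θ).trace = ∑ i, ∑ j, S j i * Θ i j := by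
    simp only [trace, diag_apply, mul_apply]
    exact Finset.sum_comm
  simp only [gelnetObj, gelnetEntryCost, htrace, Finset.sum_add_distrib, ← Finset.mul_sum]
  ring

lemma gelnetObj_pinching_lt {ι : Type*} [DecidableEq ι] (hla : 0 ≤ l * (1 - a)) (hA : A.PosDef)
    {b : Fin p → ι} (hb : ∀ i j, l * a < |S i j| → b i = b j) (hne : pinching b A ≠ A) :
    gelnetObj S l a (pinching b A) < gelnetObj S l a A := by
  rw [gelnetObj_eq_sum, gelnetObj_eq_sum]
  refine add_lt_add_of_lt_of_le (neg_lt_neg (log_det_lt_log_det_pinching hA hne)) ?_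
  refine Finset.sum_le_sum fun i _ ↦ Finset.sum_le_sum fun j _ ↦ ?_
  rw [pinching_apply]
  split_ifs with hij
  · rfl
  · rw [gelnetEntryCost_zero]
    exact gelnetEntryCost_nonneg hla (not_lt.mp fun h ↦ hij (hb j i h).symm) _

lemma gelnetObj_add_smul_symmSingle (hS : S.IsHermitian) (hA : A.IsHermitian) {i j : Fin p}
    (hne : i ≠ j) (hij : A i j = 0) (t : ℝ) :
    gelnetObj S l a (A + t • symmSingle ℝ i j) + Real.log (A + t • symmSingle ℝ i j).det
      = gelnetObj S l a A + Real.log A.det + 2 * gelnetEntryCost l a (S i j) t := by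
  have hji : A j i = 0 := by simpa [hij] using hA.apply i j
  have hSji : S j i = S i j := by simpa using hS.apply i j
  rw [gelnetObj_eq_sum, gelnetObj_eq_sum, sum_apply_add_smul_symmSingle hne hij hji
    (fun k m ↦ gelnetEntryCost l a (S m k)) (fun _ _ ↦ gelnetEntryCost_zero l a _), hSji]
  ring

lemma eventually_mul_inv_apply_le_gelnetEntryCost (hS : S.IsHermitian) (hA : A.PosDef)
    (hmin : IsMinOn (gelnetObj S l a) {Θ | Θ.PosDef} A) {i j : Fin p} (hij : A i j = 0) :
    ∀ᶠ t in 𝓝 (0 : ℝ), t * (A + t • symmSingle ℝ i j)⁻¹ i j ≤ gelnetEntryCost l a (S i j) t := by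
  have hne : i ≠ j := by
    rintro rfl
    exact hA.diag_pos.ne' hij
  have hpath : Tendsto (fun t : ℝ ↦ A + t • symmSingle ℝ i j) (𝓝 0) (𝓝 A) :=
    Continuous.tendsto' (by fun_prop) _ _ (by simp)
  filter_upwards [hpath.eventually (eventually_posDef_of_isHermitian hA)] with t ht
  have hcost := gelnetObj_add_smul_symmSingle (l := l) (a := a) hS hA.1 hne hij t
  set B := A + t • symmSingle ℝ i j with hBdef
  have hB : B.PosDef := ht (hA.1.add ((isHermitian_symmSingle i j).smul (.all t)))
  have hobj : gelnetObj S l a A ≤ gelnetObj S l a B := hmin hB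
  have htangent := log_det_le_log_det_add_trace hB hA
  have htrace : (B⁻¹ * (A - B)).trace = -2 * (t * B⁻¹ i j) := by
    have hBji : B⁻¹ j i = B⁻¹ i j := by simpa using hB.inv.1.apply i j
    have hdiff : A - B = -t • symmSingle ℝ i j := by simp [hBdef]
    rw [hdiff, Matrix.mul_smul, trace_smul, trace_mul_symmSingle, hBji, smul_eq_mul]
    ring
  linarith

lemma abs_sub_inv_apply_le (hS : S.IsHermitian) (hA : A.PosDef)
    (hmin : IsMinOn (gelnetObj S l a) {Θ | Θ.PosDef} A) {i j : Fin p} (hij : A i j = 0) :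
    |S i j - A⁻¹ i j| ≤ l * a := by
  have hpath : Tendsto (fun t : ℝ ↦ A + t • symmSingle ℝ i j) (𝓝 0) (𝓝 A) :=
    Continuous.tendsto' (by fun_prop) _ _ (by simp)
  exact abs_sub_le_of_eventually_mul_le ((continuousAt_inv_apply hA.isUnit i j).tendsto.comp hpath)
    (eventually_mul_inv_apply_le_gelnetEntryCost hS hA hmin hij)

lemma forall_lt_abs_imp_eq_iff_isBlockDiagonal {ι : Type*} (hla : 0 ≤ l * (1 - a))
    (hS : S.IsHermitian) (hA : A.PosDef) (hmin : IsMinOn (gelnetObj S l a) {Θ | Θ.PosDef} A)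
    (b : Fin p → ι) : (∀ i j, l * a < |S i j| → b i = b j) ↔ IsBlockDiagonal A b := by
  classical
  refine ⟨fun hb ↦ pinching_eq_self_iff.mp ?_, fun hb i j hlt ↦ ?_⟩
  · by_contra hne
    exact (hmin (posDef_pinching hA b)).not_gt (gelnetObj_pinching_lt hla hA hb hne)
  · by_contra hij
    have hkkt := abs_sub_inv_apply_le hS hA hmin (hb.apply_eq_zero hij)
    rw [(hb.inv hA.isUnit).apply_eq_zero hij, sub_zero] at hkkt
    exact hkkt.not_gt hlt

end GraphicalElasticNet

theorem gelnet_components_eq_thresholded_general {p : ℕ} {S Θstar : Matrix (Fin p) (Fin p) ℝ}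
    {l a : ℝ} (hla : 0 ≤ l * (1 - a)) (hS : S.IsHermitian) (hΘ : Θstar.PosDef)
    (hmin : IsMinOn (gelnetObj S l a) {Θ | Θ.PosDef} Θstar) (i j : Fin p) :
    (SimpleGraph.fromRel fun i j : Fin p => l * a < |S i j|).Reachable i j ↔
      (SimpleGraph.fromRel fun i j : Fin p => Θstar i j ≠ 0).Reachable i j := by
  rw [reachable_fromRel_iff_forall_eq, reachable_fromRel_iff_forall_eq]
  exact forall₂_congr fun _ b ↦
    imp_congr_left (forall_lt_abs_imp_eq_iff_isBlockDiagonal hla hS hΘ hmin b)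

/-- The connected components of the thresholded covariance graph `G` coincide with
those of the graph `𝒢` of nonzero off-diagonal entries of the minimizer: the two
graphs induce the same reachability relation, hence the same vertex partition and
number of connected components. -/
theorem gelnet_components_eq_thresholded {p : ℕ}
    (S Θstar : Matrix (Fin p) (Fin p) ℝ) (l a : ℝ)
    (hl : 0 < l) (ha : a ∈ Set.Ioc (0 : ℝ) 1)
    (hS : S.PosSemidef)
    (hΘ : Θstar.PosDef)
    (hmin : ∀ Θ : Matrix (Fin p) (Fin p) ℝ, Θ.PosDef →
      gelnetObj S l a Θstar ≤ gelnetObj S l a Θ) :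
    ∀ i j : Fin p,
      (SimpleGraph.fromRel fun i j : Fin p => l * a < |S i j|).Reachable i j ↔
      (SimpleGraph.fromRel fun i j : Fin p => Θstar i j ≠ 0).Reachable i j := by
  exact gelnet_components_eq_thresholded_general
    (mul_nonneg hl.le (sub_nonneg.mpr ha.2)) hS.isHermitian hΘ (isMinOn_iff.mpr hmin)
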